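/- arXiv:2309.08093 — 3 statements merged into one kernel-verified Lean document; each statement's English description precedes it below -/
import Mathlib

section
/- Let $S_1 \in \mathbb{R}^{m \times n_1}$ and $S_2 \in \mathbb{R}^{m \times n_2}$ be CountSketch matrices with hash maps $h_1, h_2$ and sign vectors $v_1, v_2$, and let $S \in \mathbb{R}^{m \times n_1 n_2}$ be the TensorSketch matrix generated by $S_1$ and $S_2$ (i.e., the CountSketch-type matrix with hash map $h(i_1,i_2) = ((h_1(i_1)+h_2(i_2)-2) \bmod m)+1$ and sign $v(i_1,i_2)=v_1(i_1)v_2(i_2)$, column index $i = i_1 + (i_2-1)n_1$). Then $S = F^{-1}\,[(F S_2) \,\square\, (F S_1)]$, where $F \in \mathbb{C}^{m \times m}$ is the (invertible) discrete Fourier transform matrix; equivalently, $(F S)(s, i) = (F S_2)(s, i_2)\,(F S_1)(s, i_1)$ for all $s \in [m]$ and all $(i_1,i_2) \in [n_1]\times[n_2]$. -/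
open Matrix Complex

noncomputable def dft (m : ℕ) : Matrix (Fin m) (Fin m) ℂ :=
  Matrix.of fun s t : Fin m =>
    Complex.exp (-2 * Real.pi * Complex.I * ((s : ℕ) : ℂ) * ((t : ℕ) : ℂ) / (m : ℂ))

def countSketch {m : ℕ} {ι : Type*} (h : ι → Fin m) (v : ι → ℝ) :
    Matrix (Fin m) ι ℝ :=
  Matrix.of fun j i => if h i = j then v i else 0

def faceSplit {μ n₁ n₂ α : Type*} [Mul α] (D : Matrix μ n₂ α) (C : Matrix μ n₁ α) :
    Matrix μ (n₁ × n₂) α :=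
  Matrix.of fun s i => D s i.2 * C s i.1

def hashPair {m : ℕ} [NeZero m] {ι₁ ι₂ : Type*} (h₁ : ι₁ → Fin m) (h₂ : ι₂ → Fin m) :
    ι₁ × ι₂ → Fin m :=
  fun i => ⟨((h₁ i.1 : ℕ) + (h₂ i.2 : ℕ)) % m, Nat.mod_lt _ (Nat.pos_of_ne_zero (NeZero.ne m))⟩

def hashFam {m : ℕ} [NeZero m] {q : ℕ} {n : Fin q → ℕ} (h : ∀ k, Fin (n k) → Fin m) :
    (∀ k, Fin (n k)) → Fin m :=
  fun i => ⟨(∑ k, (h k (i k) : ℕ)) % m, Nat.mod_lt _ (Nat.pos_of_ne_zero (NeZero.ne m))⟩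

def ttChain (r n : ℕ → ℕ) {α : Type*} [Semiring α]
    (G : (j : ℕ) → Fin (n j) → Matrix (Fin (r j)) (Fin (r (j + 1))) α) :
    (p : ℕ) → ((j : Fin p) → Fin (n j)) → Matrix (Fin (r 0)) (Fin (r p)) α
  | 0, _ => 1
  | p + 1, i => ttChain r n G p (fun j => i j.castSucc) * G p (i (Fin.last p))

lemma dft_eq_pow (m : ℕ) (s t : Fin m) :
    dft m s t = ((Complex.exp (2 * Real.pi * Complex.I / m))⁻¹ ^ (s : ℕ)) ^ (t : ℕ) := by
  rw [← Complex.exp_neg, ← Complex.exp_nat_mul, ← Complex.exp_nat_mul]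
  simp only [dft, Matrix.of_apply]
  congr 1
  ring

lemma dft_isUnit_det (m : ℕ) [NeZero m] : IsUnit (dft m).det := by
  have hp := (Complex.isPrimitiveRoot_exp m (NeZero.ne m)).inv
  have : dft m = Matrix.vandermonde
      (fun s : Fin m => (Complex.exp (2 * Real.pi * Complex.I / m))⁻¹ ^ (s : ℕ)) := by
    ext s t
    rw [dft_eq_pow, Matrix.vandermonde_apply]
  rw [isUnit_iff_ne_zero, this, Matrix.det_vandermonde_ne_zero_iff]
  intro a b hab
  exact Fin.ext (hp.pow_inj a.2 b.2 hab)

lemma dft_mul_countSketch {m : ℕ} {ι : Type*} (h : ι → Fin m) (v : ι → ℝ) (s : Fin m) (i : ι) :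
    (dft m * (countSketch h v).map Complex.ofReal) s i = dft m s (h i) * (v i : ℂ) := by
  simp [Matrix.mul_apply, countSketch, apply_ite Complex.ofReal]

lemma dft_hashPair {m : ℕ} [NeZero m] {ι₁ ι₂ : Type*} (h₁ : ι₁ → Fin m) (h₂ : ι₂ → Fin m)
    (s : Fin m) (i : ι₁ × ι₂) :
    dft m s (hashPair h₁ h₂ i) = dft m s (h₂ i.2) * dft m s (h₁ i.1) := by
  have hp := (Complex.isPrimitiveRoot_exp m (NeZero.ne m)).inv
  rw [dft_eq_pow, dft_eq_pow, dft_eq_pow, ← pow_add, add_comm]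
  simp only [hashPair]
  refine (pow_eq_pow_mod _ ?_).symm
  rw [pow_right_comm, hp.pow_eq_one, one_pow]

/-- Lemma 3.1: the TensorSketch matrix generated by two CountSketch
matrices satisfies `S = F⁻¹ [(F S₂) □ (F S₁)]`, equivalently
`(F S)(s, (i₁,i₂)) = (F S₂)(s,i₂) * (F S₁)(s,i₁)`. -/
theorem tensorSketch_eq_invDFT_faceSplit
    {m n₁ n₂ : ℕ} [NeZero m]
    (h₁ : Fin n₁ → Fin m) (h₂ : Fin n₂ → Fin m)
    (v₁ : Fin n₁ → ℝ) (v₂ : Fin n₂ → ℝ)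
    (hv₁ : ∀ i, v₁ i = 1 ∨ v₁ i = -1) (hv₂ : ∀ i, v₂ i = 1 ∨ v₂ i = -1)
    (S : Matrix (Fin m) (Fin n₁ × Fin n₂) ℝ)
    (hS : S = countSketch (hashPair h₁ h₂) (fun i => v₁ i.1 * v₂ i.2)) :
    S.map Complex.ofReal =
      (dft m)⁻¹ *
        faceSplit (dft m * (countSketch h₂ v₂).map Complex.ofReal)
                  (dft m * (countSketch h₁ v₁).map Complex.ofReal) ∧
    ∀ (s : Fin m) (i : Fin n₁ × Fin n₂),
      (dft m * S.map Complex.ofReal) s i =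
        (dft m * (countSketch h₂ v₂).map Complex.ofReal) s i.2 *
        (dft m * (countSketch h₁ v₁).map Complex.ofReal) s i.1 := by
  have key : ∀ (s : Fin m) (i : Fin n₁ × Fin n₂),
      (dft m * S.map Complex.ofReal) s i =
        (dft m * (countSketch h₂ v₂).map Complex.ofReal) s i.2 *
        (dft m * (countSketch h₁ v₁).map Complex.ofReal) s i.1 := by
    intro s i
    rw [hS, dft_mul_countSketch, dft_mul_countSketch, dft_mul_countSketch, dft_hashPair]
    push_cast
    ring
  refine ⟨?_, key⟩
  have hF : faceSplit (dft m * (countSketch h₂ v₂).map Complex.ofReal)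
      (dft m * (countSketch h₁ v₁).map Complex.ofReal) = dft m * S.map Complex.ofReal := by
    ext s i
    exact (key s i).symm
  rw [hF, Matrix.nonsing_inv_mul_cancel_left _ _ (dft_isUnit_det m)]
end

section
/- Let $\mathcal{G}_1 \in \mathbb{R}^{1 \times n_1 \times r_1}, \mathcal{G}_2 \in \mathbb{R}^{r_1 \times n_2 \times r_2}, \ldots, \mathcal{G}_{k-1} \in \mathbb{R}^{r_{k-2} \times n_{k-1} \times r_{k-1}}$ be TT-cores and let $G_{<k} \in \mathbb{R}^{n_1 \cdots n_{k-1} \times r_{k-1}}$ be the matrix whose row indexed by $(i_1, \ldots, i_{k-1})$ equals the product $\mathcal{G}_1(i_1)\mathcal{G}_2(i_2)\cdots\mathcal{G}_{k-1}(i_{k-1})$. Let $S_{<k} \in \mathbb{R}^{m \times n_1\cdots n_{k-1}}$ be the TensorSketch matrix generated by CountSketch matrices $S_1, \ldots, S_{k-1}$ with $S_j \in \mathbb{R}^{m \times n_j}$, and $F \in \mathbb{C}^{m\times m}$ the DFT matrix. Then $F S_{<k} G_{<k} = \left[(\mathcal{G}_1 \times_2 F S_1) \star (\mathcal{G}_2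 \times_2 F S_2) \star \cdots \star (\mathcal{G}_{k-1} \times_2 F S_{k-1})\right]^{\mathrm{L}}$, where $[\cdot]^{\mathrm{L}}$ denotes the left unfolding of a third-order tensor. -/
open Matrix Complex

/-- The complex third-order tensor `𝒢_j ×₂ (F S_j)` (2-mode product of the TT-core `𝒢_j`
with the DFT-transformed CountSketch matrix `F S_j`), presented by its lateral slices:
`(𝒢_j ×₂ F S_j)(s) = ∑ i, (F S_j)(s,i) • 𝒢_j(i)`. -/
noncomputable def modeCore {m : ℕ} (r n : ℕ → ℕ)
    (G : (j : ℕ) → Fin (n j) → Matrix (Fin (r j)) (Fin (r (j + 1))) ℝ)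
    (h : (j : ℕ) → Fin (n j) → Fin m) (v : (j : ℕ) → Fin (n j) → ℝ) :
    (j : ℕ) → Fin m → Matrix (Fin (r j)) (Fin (r (j + 1))) ℂ :=
  fun j s => Matrix.of fun x y =>
    ∑ i, (dft m * (countSketch (h j) (v j)).map Complex.ofReal) s i * ((G j i x y : ℝ) : ℂ)

lemma dft_mod {m : ℕ} [NeZero m] (s : Fin m) (t : ℕ) (ht : t % m < m) :
    dft m s ⟨t % m, ht⟩ =
      Complex.exp (-2 * Real.pi * Complex.I * ((s : ℕ) : ℂ) * (t : ℂ) / (m : ℂ)) := by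
  have hm : (m : ℂ) ≠ 0 := Nat.cast_ne_zero.mpr (NeZero.ne m)
  simp only [dft, Matrix.of_apply]
  rw [Complex.exp_eq_exp_iff_exists_int]
  refine ⟨(s : ℕ) * (t / m : ℕ), ?_⟩
  have ht : (t : ℂ) = ((t % m : ℕ) : ℂ) + (m : ℂ) * ((t / m : ℕ) : ℂ) := by
    exact_mod_cast (Nat.mod_add_div t m).symm
  rw [ht]
  generalize t / m = q
  generalize t % m = w
  push_cast
  field_simp
  ring

lemma dft_hashFam {m : ℕ} [NeZero m] {q : ℕ} {n : Fin q → ℕ} (h : ∀ k, Fin (n k) → Fin m)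
    (s : Fin m) (i : ∀ k, Fin (n k)) :
    dft m s (hashFam h i) = ∏ k, dft m s (h k (i k)) := by
  rw [hashFam, dft_mod]
  simp only [dft, Matrix.of_apply]
  rw [← Complex.exp_sum]
  congr 1
  push_cast
  rw [Finset.mul_sum, Finset.sum_div]

lemma chain_sum (r n : ℕ → ℕ) {m : ℕ}
    (G : (j : ℕ) → Fin (n j) → Matrix (Fin (r j)) (Fin (r (j + 1))) ℝ)
    (h : (j : ℕ) → Fin (n j) → Fin m) (v : (j : ℕ) → Fin (n j) → ℝ) (s : Fin m)
    (a : Fin (r 0)) : ∀ (p : ℕ) (c : Fin (r p)),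
    ∑ i : ((j : Fin p) → Fin (n j)),
      (∏ j : Fin p, (dft m s (h j (i j)) * (v j (i j) : ℂ))) *
        ((ttChain r n G p i a c : ℝ) : ℂ) =
      ttChain r (fun _ => m) (modeCore r n G h v) p (fun _ => s) a c := by
  intro p
  induction p with
  | zero => 
    intro c
    by_cases hac : a = c <;> simp [ttChain, Matrix.one_apply, hac]
  | succ p ih =>
    intro c
    rw [← (Fin.snocEquiv (fun j : Fin (p + 1) => Fin (n j))).sum_comp, Fintype.sum_prod_type]
    simp only [ttChain, Matrix.mul_apply, Fin.prod_univ_castSucc, Fin.snocEquiv_apply,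
      Fin.snoc_castSucc, Fin.snoc_last]
    simp only [← ih, modeCore, Matrix.of_apply, dft_mul_countSketch]
    simp only [Fin.val_castSucc, Fin.val_last]
    push_cast
    simp only [Finset.mul_sum, Finset.sum_mul]
    symm
    rw [Finset.sum_comm]
    refine Finset.sum_congr rfl fun x _ => ?_
    rw [Finset.sum_comm]
    refine Finset.sum_congr rfl fun f _ => ?_
    refine Finset.sum_congr rfl fun y _ => ?_
    exact mul_mul_mul_comm _ _ _ _

/-- Theorem 3.5, first identity: for TT-cores `𝒢₁ ∈ ℝ^{1×n₁×r₁}, …,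
𝒢_{k-1} ∈ ℝ^{r_{k-2}×n_{k-1}×r_{k-1}}` (here `p = k-1` cores with ranks `r 0 = 1`), the
matrix `G_{<k}` whose row at `(i₁,…,i_{k-1})` is `𝒢₁(i₁)⋯𝒢_{k-1}(i_{k-1})`, and the
TensorSketch matrix `S_{<k}` generated by CountSketch matrices `S₁,…,S_{k-1}`, one has
`F S_{<k} G_{<k} = [(𝒢₁ ×₂ F S₁) ⋆ ⋯ ⋆ (𝒢_{k-1} ×₂ F S_{k-1})]^L`; the left unfolding is
expressed entrywise via the identification `Fin (r 0) × Fin m ≃ Fin m` given by `r 0 = 1`: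
the `((a,s), c)` entry of the left unfolding is the `(a,c)` entry of the `s`-th slice of the
slice-wise product. -/
theorem dft_tensorSketch_interfaceLeft_eq_sliceChain
    {m p : ℕ} [NeZero m] (r n : ℕ → ℕ) (hr0 : r 0 = 1)
    (G : (j : ℕ) → Fin (n j) → Matrix (Fin (r j)) (Fin (r (j + 1))) ℝ)
    (h : (j : ℕ) → Fin (n j) → Fin m) (v : (j : ℕ) → Fin (n j) → ℝ)
    (hv : ∀ j i, v j i = 1 ∨ v j i = -1)
    (Glt : Matrix ((j : Fin p) → Fin (n j)) (Fin (r p)) ℝ)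
    (hGlt : ∀ i (a : Fin (r 0)) c, Glt i c = ttChain r n G p i a c)
    (Slt : Matrix (Fin m) ((j : Fin p) → Fin (n j)) ℝ)
    (hSlt : Slt = countSketch (hashFam (n := fun j : Fin p => n j) (fun j => h j))
      (fun i => ∏ j : Fin p, v (↑j) (i j))) :
    ∀ (s : Fin m) (a : Fin (r 0)) (c : Fin (r p)),
      (dft m * Slt.map Complex.ofReal * Glt.map Complex.ofReal) s c =
        ttChain r (fun _ => m) (modeCore r n G h v) p (fun _ => s) a c := by
  intro s a c
  subst hSlt
  rw [← chain_sum, Matrix.mul_apply]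
  refine Finset.sum_congr rfl fun i _ => ?_
  rw [dft_mul_countSketch, dft_hashFam, Matrix.map_apply, hGlt i a c, Finset.prod_mul_distrib]
  push_cast
  rfl
end

section
/- (Approximate matrix product for TensorSketch.) Let $S \in \mathbb{R}^{m \times n_1 n_2 \cdots n_q}$ be a random TensorSketch matrix generated by mutually independent random hash maps $h_i : [n_i] \to [m]$, each 3-wise independent, and mutually independent random sign functions $v_i : [n_i] \to \{-1, 1\}$, each 4-wise independent (with the $h_i$'s and $v_i$'s all mutually independent). Let $A$ and $B$ be fixed real matrices with $n_1 n_2 \cdots n_q$ rows. If $m \ge (2 + 3^q)/(\epsilon_0^2 \delta_0)$, then $\Pr\left[\|A^{\top} S^{\top} S B - A^{\top} B\|_F^2 \le \epsilon_0^2\, \|A\|_F^2\, \|B\|_F^2\right] \ge 1 - \delta_0$. -/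
open Matrix MeasureTheory

/-- The TensorSketch matrix generated by hash maps `h k` and sign functions `v k`:
the CountSketch-type matrix with hash map `hashFam h` and sign `i ↦ ∏ k, v k (i k)`. -/
def tsMat {m q : ℕ} [NeZero m] {n : Fin q → ℕ}
    (h : ∀ k, Fin (n k) → Fin m) (v : ∀ k, Fin (n k) → ℝ) :
    Matrix (Fin m) (∀ k, Fin (n k)) ℝ :=
  countSketch (hashFam h) (fun i => ∏ k, v k (i k))

/-- The squared Frobenius norm of a real matrix. -/
def frobSq {α β : Type*} [Fintype α] [Fintype β] (A : Matrix α β ℝ) : ℝ :=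
  ∑ i, ∑ j, A i j ^ 2

/-- A random hash map `h : Ω → ι → Fin m` is `k`-wise independent: each value `h(i)` is
uniformly distributed on `[m]`, and any at most `k` values at distinct indices are mutually
independent (their joint distribution factorizes). -/
def KWiseIndepHash {Ω : Type*} [MeasurableSpace Ω] (μ : Measure Ω) (k : ℕ)
    {ι : Type*} {m : ℕ} (h : Ω → ι → Fin m) : Prop :=
  (∀ (i : ι) (j : Fin m), μ {ω | h ω i = j} = 1 / (m : ENNReal)) ∧
  ∀ t : Finset ι, t.card ≤ k → ∀ j : ι → Fin m,
    μ {ω | ∀ i ∈ t, h ω i = j i} = ∏ i ∈ t, μ {ω | h ω i = j i}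

/-- A random sign function `v : Ω → ι → ℝ` is `k`-wise independent: it takes values in
`{-1, 1}`, each value is uniform on `{-1, 1}`, and any at most `k` values at distinct
indices are mutually independent. -/
def KWiseIndepSign {Ω : Type*} [MeasurableSpace Ω] (μ : Measure Ω) (k : ℕ)
    {ι : Type*} (v : Ω → ι → ℝ) : Prop :=
  (∀ ω i, v ω i = 1 ∨ v ω i = -1) ∧
  (∀ (i : ι) (x : ℝ), x = 1 ∨ x = -1 → μ {ω | v ω i = x} = 1 / 2) ∧
  ∀ t : Finset ι, t.card ≤ k → ∀ x : ι → ℝ,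
    μ {ω | ∀ i ∈ t, v ω i = x i} = ∏ i ∈ t, μ {ω | v ω i = x i}

/-- The random hash maps `H k` and random sign functions `V k` are all mutually independent
(as finitely-valued random variables, their joint distribution factorizes). -/
def IndepHashSigns {Ω : Type*} [MeasurableSpace Ω] (μ : Measure Ω)
    {κ : Type*} [Fintype κ] {n : κ → ℕ} {m : ℕ}
    (H : ∀ k, Ω → Fin (n k) → Fin m) (V : ∀ k, Ω → Fin (n k) → ℝ) : Prop :=
  ∀ (g : ∀ k, Fin (n k) → Fin m) (w : ∀ k, Fin (n k) → ℝ),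
    μ {ω | (∀ k, H k ω = g k) ∧ (∀ k, V k ω = w k)} =
      (∏ k, μ {ω | H k ω = g k}) * ∏ k, μ {ω | V k ω = w k}


/-- pairing indicator count -/
noncomputable def tsK {ι : Type*} [DecidableEq ι] (i j k l : ι) : ℝ :=
  (if i = j ∧ k = l then 1 else 0) + (if i = k ∧ j = l then 1 else 0) +
    (if i = l ∧ j = k then 1 else 0)

lemma tsK_nonneg {ι : Type*} [DecidableEq ι] (i j k l : ι) : 0 ≤ tsK i j k l := by
  unfold tsK; positivity

lemma tsK_sum {ι : Type*} [Fintype ι] [DecidableEq ι] (a b c d : ι → ℝ) :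
    ∑ i, ∑ j, ∑ k, ∑ l, a i * b j * c k * d l * tsK i j k l ≤
      3 * (√(∑ i, a i ^ 2) * √(∑ i, b i ^ 2) * √(∑ i, c i ^ 2) * √(∑ i, d i ^ 2)) := by
  have e : ∑ i, ∑ j, ∑ k, ∑ l, a i * b j * c k * d l * tsK i j k l =
      (∑ i, a i * b i) * (∑ i, c i * d i) + (∑ i, a i * c i) * (∑ i, b i * d i) +
      (∑ i, a i * d i) * (∑ i, b i * c i) := by
    simp only [tsK, mul_add, Finset.sum_add_distrib, Finset.sum_mul_sum, mul_ite, mul_one, mul_zero]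
    congr 1
    · congr 1
      · refine Finset.sum_congr rfl fun i _ => ?_
        rw [Finset.sum_eq_single i]
        · refine Finset.sum_congr rfl fun k _ => ?_
          rw [Finset.sum_eq_single k] <;> simp +contextual
          · ring
          · intro b h h'; exact absurd h'.symm h
        · intro j _ h; simp [Ne.symm h]
        · simp
      · refine Finset.sum_congr rfl fun i _ => ?_
        refine Finset.sum_congr rfl fun j _ => ?_
        rw [Finset.sum_eq_single i]
        · rw [Finset.sum_eq_single j]
          · simp; ring
          · intro l _ h; simp [Ne.symm h]
          · simp
        · intro k _ h; simp [Ne.symm h]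
        · simp
    · refine Finset.sum_congr rfl fun i _ => ?_
      refine Finset.sum_congr rfl fun j _ => ?_
      rw [Finset.sum_eq_single j]
      · rw [Finset.sum_eq_single i]
        · simp; ring
        · intro l _ h; simp [Ne.symm h]
        · simp
      · intro k _ h; simp [Ne.symm h]
      · simp
  have cs : ∀ f g : ι → ℝ, |∑ i, f i * g i| ≤ √(∑ i, f i ^ 2) * √(∑ i, g i ^ 2) := by
    intro f g
    rw [abs_le]
    constructor
    · have := Real.sum_mul_le_sqrt_mul_sqrt Finset.univ (fun i => - f i) g
      simp only [neg_mul, Finset.sum_neg_distrib, neg_sq] at this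
      linarith
    · exact Real.sum_mul_le_sqrt_mul_sqrt Finset.univ f g
  have cs2 : ∀ f g f' g' : ι → ℝ, (∑ i, f i * g i) * (∑ i, f' i * g' i) ≤
      (√(∑ i, f i ^ 2) * √(∑ i, g i ^ 2)) * (√(∑ i, f' i ^ 2) * √(∑ i, g' i ^ 2)) := by
    intro f g f' g'
    refine (le_abs_self _).trans ?_
    rw [abs_mul]
    exact mul_le_mul (cs _ _) (cs _ _) (abs_nonneg _) (by positivity)
  rw [e]
  have h1 := cs2 a b c d
  have h2 := cs2 a c b d
  have h3 := cs2 a d b c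
  nlinarith

lemma sum_pi_cons {q : ℕ} {n : Fin (q + 1) → ℕ} (f : (∀ k, Fin (n k)) → ℝ) :
    ∑ i, f i = ∑ x : Fin (n 0), ∑ i' : ∀ k : Fin q, Fin (n k.succ), f (Fin.cons x i') := by
  rw [← (Fin.consEquiv (fun k => Fin (n k))).sum_comp, Fintype.sum_prod_type]
  rfl

lemma tsK_tensor {q : ℕ} {n : Fin q → ℕ} (a b c d : (∀ k, Fin (n k)) → ℝ)
    (ha : ∀ i, 0 ≤ a i) (hb : ∀ i, 0 ≤ b i) (hc : ∀ i, 0 ≤ c i) (hd : ∀ i, 0 ≤ d i) :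
    ∑ i, ∑ j, ∑ k, ∑ l, a i * b j * c k * d l * ∏ t, tsK (i t) (j t) (k t) (l t) ≤
      3 ^ q * (√(∑ i, a i ^ 2) * √(∑ i, b i ^ 2) * √(∑ i, c i ^ 2) * √(∑ i, d i ^ 2)) := by
  induction q with
  | zero =>
    simp [Real.sqrt_sq, ha, hb, hc, hd]
  | succ q ih =>
    set N : ((∀ k, Fin (n k)) → ℝ) → Fin (n 0) → ℝ := fun f x =>
      √(∑ i' : ∀ k : Fin q, Fin (n k.succ), f (Fin.cons x i') ^ 2) with hN
    have hNN : ∀ f : (∀ k, Fin (n k)) → ℝ, ∑ i, f i ^ 2 = ∑ x, N f x ^ 2 := by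
      intro f
      rw [sum_pi_cons]
      refine Finset.sum_congr rfl fun x _ => ?_
      rw [hN, Real.sq_sqrt (by positivity)]
    rw [hNN a, hNN b, hNN c, hNN d]
    have key := tsK_sum (N a) (N b) (N c) (N d)
    calc _ = ∑ i0, ∑ j0, ∑ k0, ∑ l0, tsK i0 j0 k0 l0 *
          ∑ i, ∑ j, ∑ k, ∑ l, a (Fin.cons i0 i) * b (Fin.cons j0 j) * c (Fin.cons k0 k) *
            d (Fin.cons l0 l) * ∏ t, tsK (i t) (j t) (k t) (l t) := by
          simp only [sum_pi_cons, Fin.prod_univ_succ, Fin.cons_zero, Fin.cons_succ]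
          refine Finset.sum_congr rfl fun i0 _ => ?_
          rw [Finset.sum_comm]
          refine Finset.sum_congr rfl fun j0 _ => ?_
          simp_rw [Finset.sum_comm (s := (Finset.univ : Finset (∀ k : Fin q, Fin (n k.succ)))) (t := (Finset.univ : Finset (Fin (n 0))))]
          refine Finset.sum_congr rfl fun k0 _ => ?_
          refine Finset.sum_congr rfl fun l0 _ => ?_
          simp only [Finset.mul_sum]
          refine Finset.sum_congr rfl fun i _ => ?_
          refine Finset.sum_congr rfl fun j _ => ?_
          refine Finset.sum_congr rfl fun k _ => ?_
          refine Finset.sum_congr rfl fun l _ => ?_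
          ring
      _ ≤ ∑ i0, ∑ j0, ∑ k0, ∑ l0, tsK i0 j0 k0 l0 *
            (3 ^ q * (N a i0 * N b j0 * N c k0 * N d l0)) := by
          gcongr with i0 _ j0 _ k0 _ l0 _
          · exact tsK_nonneg _ _ _ _
          · exact ih _ _ _ _ (fun _ => ha _) (fun _ => hb _) (fun _ => hc _) (fun _ => hd _)
      _ = 3 ^ q * ∑ i0, ∑ j0, ∑ k0, ∑ l0, N a i0 * N b j0 * N c k0 * N d l0 *
            tsK i0 j0 k0 l0 := by
          simp only [Finset.mul_sum]
          refine Finset.sum_congr rfl fun i _ => ?_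
          refine Finset.sum_congr rfl fun j _ => ?_
          refine Finset.sum_congr rfl fun k _ => ?_
          refine Finset.sum_congr rfl fun l _ => ?_
          ring
      _ ≤ _ := by
          rw [pow_succ, mul_assoc]
          gcongr

section measureFacts
variable {Ω : Type*} [MeasurableSpace Ω] {μ : Measure Ω} [IsProbabilityMeasure μ]

lemma nullMeas_of_sum {G : Type*} [Fintype G] [DecidableEq G] (X : Ω → G)
    (h : ∑ g, μ {ω | X ω = g} = 1) (g : G) : NullMeasurableSet {ω | X ω = g} μ := by
  set A : Set Ω := {ω | X ω = g} with hA
  have hc : μ Aᶜ ≤ ∑ g' ∈ Finset.univ.erase g, μ {ω | X ω = g'} := by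
    refine (measure_mono ?_).trans (measure_biUnion_finset_le _ _)
    intro ω hω
    simp only [Set.mem_iUnion]
    exact ⟨X ω, by simpa [hA] using hω, rfl⟩
  have hs : μ A + μ Aᶜ ≤ 1 := by
    rw [← h, ← Finset.add_sum_erase _ _ (Finset.mem_univ g)]
    gcongr
  have hu : toMeasurable μ A ∪ toMeasurable μ Aᶜ = Set.univ := by
    apply Set.eq_univ_of_univ_subset
    rw [← Set.union_compl_self A]
    exact Set.union_subset_union (subset_toMeasurable _ _) (subset_toMeasurable _ _)
  have hi : μ (toMeasurable μ A ∩ toMeasurable μ Aᶜ) = 0 := by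
    have := measure_union_add_inter (μ := μ) (toMeasurable μ A) (measurableSet_toMeasurable μ Aᶜ)
    rw [hu, measure_univ, measure_toMeasurable, measure_toMeasurable] at this
    have h2 : 1 + μ (toMeasurable μ A ∩ toMeasurable μ Aᶜ) ≤ 1 + 0 := by
      rw [this, add_zero]; exact hs
    have := (ENNReal.add_le_add_iff_left ENNReal.one_ne_top).1 h2
    simpa using this
  have hae : toMeasurable μ A =ᵐ[μ] A := by
    rw [ae_eq_set]
    constructor
    · refine measure_mono_null ?_ hi
      intro ω hω
      exact ⟨hω.1, subset_toMeasurable _ _ hω.2⟩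
    · rw [Set.sdiff_eq_empty.2 (subset_toMeasurable μ A)]; simp
  exact NullMeasurableSet.congr (measurableSet_toMeasurable μ A).nullMeasurableSet hae

lemma real_sum_fib {G : Type*} [Fintype G] [DecidableEq G] (X : Ω → G)
    (h : ∀ g, NullMeasurableSet {ω | X ω = g} μ) (p : G → Prop) [DecidablePred p] :
    ∑ g, (if p g then μ.real {ω | X ω = g} else 0) = μ.real {ω | p (X ω)} := by
  rw [← Finset.sum_filter]
  have e : {ω | p (X ω)} = ⋃ g ∈ Finset.univ.filter p, {ω | X ω = g} := by
    ext ω; simp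
  rw [e, Measure.real, measure_biUnion_finset₀, ENNReal.toReal_sum]
  · rfl
  · intros; exact measure_ne_top _ _
  · intro g _ g' _ hne
    apply Disjoint.aedisjoint
    rw [Set.disjoint_left]
    intro ω h1 h2
    exact hne (h1.symm.trans h2)
  · intro g _; exact h g

lemma nullMeas_pi {N : ℕ} {G : Type*} (X : Ω → Fin N → G)
    (h : ∀ i g, NullMeasurableSet {ω | X ω i = g} μ) (g : Fin N → G) :
    NullMeasurableSet {ω | X ω = g} μ := by
  have : {ω | X ω = g} = ⋂ i, {ω | X ω i = g i} := by
    ext ω; simp [funext_iff]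
  rw [this]
  exact NullMeasurableSet.iInter fun i => h i _

lemma hash_null {m N : ℕ} [NeZero m] {h : Ω → Fin N → Fin m} (hh : KWiseIndepHash μ 3 h)
    (g : Fin N → Fin m) : NullMeasurableSet {ω | h ω = g} μ := by
  refine nullMeas_pi h (fun i j => nullMeas_of_sum (fun ω => h ω i) ?_ j) g
  simp only [hh.1]
  simp only [Finset.sum_const, Finset.card_univ, Fintype.card_fin, nsmul_eq_mul]
  rw [mul_one_div, ENNReal.div_self]
  · exact_mod_cast NeZero.ne m
  · simp

lemma hash_pair {m N : ℕ} [NeZero m] {h : Ω → Fin N → Fin m} (hh : KWiseIndepHash μ 3 h)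
    {i j : Fin N} (hij : i ≠ j) (x y : Fin m) :
    ∑ g : Fin N → Fin m, (if g i = x ∧ g j = y then μ.real {ω | h ω = g} else 0) =
      1 / (m : ℝ) ^ 2 := by
  rw [real_sum_fib h (hash_null hh) (fun g => g i = x ∧ g j = y)]
  have := hh.2 {i, j} (Finset.card_le_two.trans (by norm_num)) (fun k => if k = i then x else y)
  rw [Finset.prod_pair hij] at this
  simp only [Finset.mem_insert, Finset.mem_singleton, forall_eq_or_imp, forall_eq, if_true,
    if_neg hij.symm, hh.1] at this
  rw [Measure.real, this]
  simp
  ring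

/-- sign of a boolean -/
noncomputable def bsgn (b : Bool) : ℝ := if b then 1 else -1

/-- boolean version of sign functions -/
noncomputable def toB {ι : Type*} (v : ι → ℝ) : ι → Bool := fun i => decide (v i = 1)

lemma bsgn_toB {ι : Type*} {v : ι → ℝ} (hv : ∀ i, v i = 1 ∨ v i = -1) (i : ι) :
    bsgn (toB v i) = v i := by
  unfold bsgn toB
  rcases hv i with h | h <;> simp [h]
  norm_num

lemma toB_eq_iff {ι : Type*} {v : ι → ℝ} (hv : ∀ i, v i = 1 ∨ v i = -1) (i : ι) (b : Bool) :
    toB v i = b ↔ v i = bsgn b := by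
  unfold bsgn toB
  rcases hv i with h | h <;> cases b <;> simp [h] <;> norm_num

lemma bsgn_or (b : Bool) : bsgn b = 1 ∨ bsgn b = -1 := by cases b <;> simp [bsgn]

lemma sign_null {N : ℕ} {v : Ω → Fin N → ℝ} (hv : KWiseIndepSign μ 4 v)
    (g : Fin N → Bool) : NullMeasurableSet {ω | toB (v ω) = g} μ := by
  refine nullMeas_pi (fun ω => toB (v ω)) (fun i j => nullMeas_of_sum (fun ω => toB (v ω) i) ?_ j) g
  simp only [toB_eq_iff (hv.1 _)]
  simp only [hv.2.1 _ _ (bsgn_or _)]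
  simp [ENNReal.mul_inv_cancel]

lemma sign_marg {N : ℕ} {v : Ω → Fin N → ℝ} (hv : KWiseIndepSign μ 4 v)
    (t : Finset (Fin N)) (ht : t.card ≤ 4) (r : t → Bool) :
    ∑ w : Fin N → Bool, (if (fun i : t => w i) = r then μ.real {ω | toB (v ω) = w} else 0) =
      (1 / 2 : ℝ) ^ t.card := by
  rw [real_sum_fib (fun ω => toB (v ω)) (sign_null hv) (fun w => (fun i : t => w i) = r)]
  have := hv.2.2 t ht (fun i => if hi : i ∈ t then bsgn (r ⟨i, hi⟩) else 1)
  rw [Finset.prod_congr rfl (fun i hi => by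
    rw [hv.2.1 i _ (by simp only [hi, dite_true]; exact bsgn_or _)])] at this
  have e : {ω | (fun i : t => toB (v ω) i) = r} =
      {ω | ∀ i ∈ t, v ω i = (if hi : i ∈ t then bsgn (r ⟨i, hi⟩) else 1)} := by
    ext ω
    simp only [Set.mem_ofPred_eq, funext_iff, toB_eq_iff (hv.1 _), Subtype.forall]
    refine forall_congr' fun i => forall_congr' fun hi => ?_
    simp [hi]
  rw [e, Measure.real, this]
  simp

lemma tsSign_zero {N : ℕ} {v : Ω → Fin N → ℝ} (hv : KWiseIndepSign μ 4 v)
    {a b c d : Fin N} (hb : b ≠ a) (hc : c ≠ a) (hd : d ≠ a) :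
    ∑ w : Fin N → Bool, μ.real {ω | toB (v ω) = w} *
      (bsgn (w a) * bsgn (w b) * bsgn (w c) * bsgn (w d)) = 0 := by
  set t : Finset (Fin N) := {a, b, c, d} with ht
  have hat : a ∈ t := by simp [ht]
  have hbt : b ∈ t := by simp [ht]
  have hct : c ∈ t := by simp [ht]
  have hdt : d ∈ t := by simp [ht]
  let F : (t → Bool) → ℝ := fun r =>
    bsgn (r ⟨a, hat⟩) * bsgn (r ⟨b, hbt⟩) * bsgn (r ⟨c, hct⟩) * bsgn (r ⟨d, hdt⟩)
  have h1 : ∑ w : Fin N → Bool, μ.real {ω | toB (v ω) = w} *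
      (bsgn (w a) * bsgn (w b) * bsgn (w c) * bsgn (w d)) =
      ∑ r : t → Bool, (1 / 2 : ℝ) ^ t.card * F r := by
    symm
    rw [Finset.sum_congr rfl fun (r : t → Bool) (_ : r ∈ Finset.univ) => by
      rw [← sign_marg hv t Finset.card_le_four r, Finset.sum_mul]]
    rw [Finset.sum_comm]
    refine Finset.sum_congr rfl fun w _ => ?_
    simp only [ite_mul, zero_mul, Finset.sum_ite_eq, Finset.mem_univ, if_true]
    rfl
  rw [h1, ← Finset.mul_sum]
  have h2 : ∑ r, F r = 0 := by
    refine Finset.sum_involution (fun r _ => Function.update r ⟨a, hat⟩ (!(r ⟨a, hat⟩))) ?_ ?_ ?_ ?_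
    · intro r _
      have hb' : (⟨b, hbt⟩ : t) ≠ ⟨a, hat⟩ := by simpa using hb
      have hc' : (⟨c, hct⟩ : t) ≠ ⟨a, hat⟩ := by simpa using hc
      have hd' : (⟨d, hdt⟩ : t) ≠ ⟨a, hat⟩ := by simpa using hd
      simp only [F, Function.update_self, Function.update_of_ne hb', Function.update_of_ne hc',
        Function.update_of_ne hd']
      have : bsgn (!(r ⟨a, hat⟩)) = - bsgn (r ⟨a, hat⟩) := by
        cases r ⟨a, hat⟩ <;> simp [bsgn]
      rw [this]; ring
    · intro r _ _ h
      have := congrFun h ⟨a, hat⟩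
      simp at this
    · intros; simp
    · intro r _
      simp
  rw [h2, mul_zero]

end measureFacts

section finiteFacts
variable {Ω : Type*} [MeasurableSpace Ω] {μ : Measure Ω} [IsProbabilityMeasure μ]

lemma hash_sum {m N : ℕ} [NeZero m] {h : Ω → Fin N → Fin m} (hh : KWiseIndepHash μ 3 h) :
    ∑ g : Fin N → Fin m, μ.real {ω | h ω = g} = 1 := by
  have := real_sum_fib h (hash_null hh) (fun _ => True)
  simpa using this

lemma tsSign_sum {N : ℕ} {v : Ω → Fin N → ℝ} (hv : KWiseIndepSign μ 4 v) :
    ∑ w : Fin N → Bool, μ.real {ω | toB (v ω) = w} = 1 := by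
  have := real_sum_fib (fun ω => toB (v ω)) (sign_null hv) (fun _ => True)
  simpa using this

lemma abs_bsgn (b : Bool) : |bsgn b| = 1 := by cases b <;> simp [bsgn]

lemma sign_bound {N : ℕ} {v : Ω → Fin N → ℝ} (hv : KWiseIndepSign μ 4 v) (a b c d : Fin N) :
    |∑ w : Fin N → Bool, μ.real {ω | toB (v ω) = w} *
      (bsgn (w a) * bsgn (w b) * bsgn (w c) * bsgn (w d))| ≤ tsK a b c d := by
  by_cases hp : (a = b ∧ c = d) ∨ (a = c ∧ b = d) ∨ (a = d ∧ b = c)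
  · have h1 : (1 : ℝ) ≤ tsK a b c d := by
      unfold tsK
      rcases hp with h | h | h
      · rw [if_pos h]
        have : (0 : ℝ) ≤ (if a = c ∧ b = d then 1 else 0) := by positivity
        have : (0 : ℝ) ≤ (if a = d ∧ b = c then 1 else 0) := by positivity
        linarith
      · rw [if_pos h]
        have : (0 : ℝ) ≤ (if a = b ∧ c = d then 1 else 0) := by positivity
        have : (0 : ℝ) ≤ (if a = d ∧ b = c then 1 else 0) := by positivity
        linarith
      · rw [if_pos h]
        have : (0 : ℝ) ≤ (if a = c ∧ b = d then 1 else 0) := by positivity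
        have : (0 : ℝ) ≤ (if a = b ∧ c = d then 1 else 0) := by positivity
        linarith
    refine le_trans ?_ h1
    refine (Finset.abs_sum_le_sum_abs _ _).trans ?_
    rw [← tsSign_sum hv]
    refine le_of_eq (Finset.sum_congr rfl fun w _ => ?_)
    simp only [abs_mul, abs_bsgn, mul_one]
    exact abs_of_nonneg measureReal_nonneg
  · have hz : ∑ w : Fin N → Bool, μ.real {ω | toB (v ω) = w} *
      (bsgn (w a) * bsgn (w b) * bsgn (w c) * bsgn (w d)) = 0 := by
      have hs : (b ≠ a ∧ c ≠ a ∧ d ≠ a) ∨ (a ≠ b ∧ c ≠ b ∧ d ≠ b) ∨ (a ≠ c ∧ b ≠ c ∧ d ≠ c) ∨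
        (a ≠ d ∧ b ≠ d ∧ c ≠ d) := by grind
      rcases hs with ⟨h1, h2, h3⟩ | ⟨h1, h2, h3⟩ | ⟨h1, h2, h3⟩ | ⟨h1, h2, h3⟩
      · exact tsSign_zero hv h1 h2 h3
      · rw [← tsSign_zero hv h1 h2 h3]
        exact Finset.sum_congr rfl fun w _ => by ring
      · rw [← tsSign_zero hv h1 h2 h3]
        exact Finset.sum_congr rfl fun w _ => by ring
      · rw [← tsSign_zero hv h1 h2 h3]
        exact Finset.sum_congr rfl fun w _ => by ring
    rw [hz, abs_zero]
    exact tsK_nonneg _ _ _ _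

lemma hash_single {m N : ℕ} [NeZero m] {h : Ω → Fin N → Fin m} (hh : KWiseIndepHash μ 3 h)
    {i j : Fin N} (hij : i ≠ j) (c c' : ℕ) :
    ∑ g : Fin N → Fin m, μ.real {ω | h ω = g} *
      (if ((g i : ℕ) + c) % m = ((g j : ℕ) + c') % m then 1 else 0) ≤ 1 / (m : ℝ) := by
  have hm : (m : ℝ) ≠ 0 := by exact_mod_cast NeZero.ne m
  have e : ∑ g : Fin N → Fin m, μ.real {ω | h ω = g} *
      (if ((g i : ℕ) + c) % m = ((g j : ℕ) + c') % m then 1 else 0) =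
      ∑ x : Fin m, ∑ y : Fin m, (1 / (m : ℝ) ^ 2) *
        (if ((x : ℕ) + c) % m = ((y : ℕ) + c') % m then 1 else 0) := by
    rw [Finset.sum_congr rfl fun x (_ : x ∈ Finset.univ) =>
      Finset.sum_congr rfl fun y (_ : y ∈ Finset.univ) => by
        rw [← hash_pair hh hij x y, Finset.sum_mul]]
    simp_rw [Finset.sum_comm (s := (Finset.univ : Finset (Fin m)))
      (t := (Finset.univ : Finset (Fin N → Fin m)))]
    refine Finset.sum_congr rfl fun g _ => ?_
    rw [Finset.sum_eq_single (g i)]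
    · rw [Finset.sum_eq_single (g j)]
      · simp
      · intro y _ hy; simp [hy.symm]
      · simp
    · intro x _ hx; simp [hx.symm]
    · simp
  rw [e]
  have hy : ∀ x : Fin m, ∑ y : Fin m, (1 / (m : ℝ) ^ 2) *
        (if ((x : ℕ) + c) % m = ((y : ℕ) + c') % m then 1 else 0) ≤ 1 / (m : ℝ) ^ 2 := by
    intro x
    rw [← Finset.mul_sum, Finset.sum_boole]
    refine mul_le_of_le_one_right (by positivity) ?_
    norm_cast
    rw [Finset.card_le_one]
    intro y hy z hz
    simp only [Finset.mem_filter, Finset.mem_univ, true_and] at hy hz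
    have h1 : (y : ℕ) + c' ≡ z + c' [MOD m] := hy.symm.trans hz
    have h2 := Nat.ModEq.add_right_cancel' c' h1
    have h3 : (y : ℕ) % m = z % m := h2
    rw [Nat.mod_eq_of_lt y.2, Nat.mod_eq_of_lt z.2] at h3
    exact Fin.ext h3
  refine (Finset.sum_le_sum fun x _ => hy x).trans ?_
  simp only [Finset.sum_const, Finset.card_univ, Fintype.card_fin, nsmul_eq_mul]
  apply le_of_eq
  field_simp

lemma hash_bound {q m : ℕ} [NeZero m] {n : Fin q → ℕ} {H : ∀ k, Ω → Fin (n k) → Fin m}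
    (h3 : ∀ k, KWiseIndepHash μ 3 (H k)) {i j : ∀ k, Fin (n k)} (hij : i ≠ j) :
    ∑ g : ∀ k, Fin (n k) → Fin m, (∏ k, μ.real {ω | H k ω = g k}) *
      (if hashFam g i = hashFam g j then 1 else 0) ≤ 1 / (m : ℝ) := by
  obtain ⟨t, ht⟩ := Function.ne_iff.1 hij
  cases q with
  | zero => exact t.elim0
  | succ q =>
    rw [← (Fin.insertNthEquiv (fun k => Fin (n k) → Fin m) t).sum_comp, Fintype.sum_prod_type,
      Finset.sum_comm]
    simp only [Fin.insertNthEquiv_apply, Fin.prod_univ_succAbove _ t, hashFam, Fin.mk.injEq,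
      Fin.sum_univ_succAbove _ t, Fin.insertNth_apply_same, Fin.insertNth_apply_succAbove]
    have hb : ∀ r : ∀ k : Fin q, Fin (n (t.succAbove k)) → Fin m,
        ∑ x : Fin (n t) → Fin m, μ.real {ω | H t ω = x} *
          (∏ k, μ.real {ω | H (t.succAbove k) ω = r k}) *
          (if ((x (i t) : ℕ) + ∑ k, (r k (i (t.succAbove k)) : ℕ)) % m =
            ((x (j t) : ℕ) + ∑ k, (r k (j (t.succAbove k)) : ℕ)) % m then (1 : ℝ) else 0) ≤
        (∏ k, μ.real {ω | H (t.succAbove k) ω = r k}) * (1 / (m : ℝ)) := by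
      intro r
      refine le_trans (le_of_eq ?_) (mul_le_mul_of_nonneg_left (hash_single (h3 t) ht
        (∑ k, (r k (i (t.succAbove k)) : ℕ)) (∑ k, (r k (j (t.succAbove k)) : ℕ)))
        (Finset.prod_nonneg fun k _ => measureReal_nonneg))
      rw [Finset.mul_sum]
      exact Finset.sum_congr rfl fun x _ => by ring
    refine (Finset.sum_le_sum fun r _ => hb r).trans ?_
    rw [← Finset.sum_mul, ← Fintype.prod_sum
      (fun (k : Fin q) (r : Fin (n (t.succAbove k)) → Fin m) =>
        μ.real {ω | H (t.succAbove k) ω = r})]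
    simp [hash_sum (h3 _)]

/-- joint expectation of a product of two off-diagonal entries -/
lemma joint_bound {q m : ℕ} [NeZero m] {n : Fin q → ℕ} {H : ∀ k, Ω → Fin (n k) → Fin m}
    {V : ∀ k, Ω → Fin (n k) → ℝ}
    (h3 : ∀ k, KWiseIndepHash μ 3 (H k)) (h4 : ∀ k, KWiseIndepSign μ 4 (V k))
    {i j : ∀ k, Fin (n k)} (hij : i ≠ j) (k l : ∀ k, Fin (n k)) :
    |∑ g : ∀ k, Fin (n k) → Fin m, ∑ w : ∀ k, Fin (n k) → Bool,
      ((∏ t, μ.real {ω | H t ω = g t}) * ∏ t, μ.real {ω | toB (V t ω) = w t}) *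
      (((∏ t, bsgn (w t (i t))) * (∏ t, bsgn (w t (j t))) *
        (if hashFam g i = hashFam g j then 1 else 0)) *
       ((∏ t, bsgn (w t (k t))) * (∏ t, bsgn (w t (l t))) *
        (if hashFam g k = hashFam g l then 1 else 0)))| ≤
      1 / (m : ℝ) * ∏ t, tsK (i t) (j t) (k t) (l t) := by
  have e : ∑ g : ∀ k, Fin (n k) → Fin m, ∑ w : ∀ k, Fin (n k) → Bool,
      ((∏ t, μ.real {ω | H t ω = g t}) * ∏ t, μ.real {ω | toB (V t ω) = w t}) *
      (((∏ t, bsgn (w t (i t))) * (∏ t, bsgn (w t (j t))) *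
        (if hashFam g i = hashFam g j then 1 else 0)) *
       ((∏ t, bsgn (w t (k t))) * (∏ t, bsgn (w t (l t))) *
        (if hashFam g k = hashFam g l then 1 else 0))) =
      (∑ g : ∀ k, Fin (n k) → Fin m, (∏ t, μ.real {ω | H t ω = g t}) *
        ((if hashFam g i = hashFam g j then 1 else 0) *
          (if hashFam g k = hashFam g l then 1 else 0))) *
      ∏ t, ∑ w : Fin (n t) → Bool, μ.real {ω | toB (V t ω) = w} *
        (bsgn (w (i t)) * bsgn (w (j t)) * bsgn (w (k t)) * bsgn (w (l t))) := by
    rw [Fintype.prod_sum, Finset.sum_mul_sum]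
    refine Finset.sum_congr rfl fun g _ => Finset.sum_congr rfl fun w _ => ?_
    simp only [Finset.prod_mul_distrib]
    ring
  rw [e, abs_mul, Finset.abs_prod]
  refine mul_le_mul ?_ (Finset.prod_le_prod (fun _ _ => abs_nonneg _)
    fun t _ => sign_bound (h4 t) _ _ _ _) (Finset.prod_nonneg fun _ _ => abs_nonneg _)
    (by positivity)
  refine le_trans ?_ (hash_bound h3 hij)
  rw [abs_of_nonneg]
  · refine Finset.sum_le_sum fun g _ => ?_
    refine mul_le_mul_of_nonneg_left ?_ (Finset.prod_nonneg fun k _ => measureReal_nonneg)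
    split_ifs <;> simp
  · refine Finset.sum_nonneg fun g _ => mul_nonneg
      (Finset.prod_nonneg fun k _ => measureReal_nonneg) ?_
    split_ifs <;> simp

end finiteFacts

section assembly

lemma quad_expand {S I : Type*} [Fintype S] [Fintype I] (p : S → ℝ) (M : S → I → I → ℝ)
    (a b : I → ℝ) :
    ∑ s, p s * (∑ i, ∑ j, a i * b j * M s i j) ^ 2 =
      ∑ i, ∑ j, ∑ k, ∑ l, a i * b j * a k * b l * ∑ s, p s * (M s i j * M s k l) := by
  simp only [sq, Finset.sum_mul, Finset.mul_sum]
  simp_rw [Finset.sum_comm (s := (Finset.univ : Finset I)) (t := (Finset.univ : Finset S))]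
  refine Finset.sum_congr rfl fun s _ => ?_
  refine Finset.sum_congr rfl fun i _ => ?_
  refine Finset.sum_congr rfl fun j _ => ?_
  refine Finset.sum_congr rfl fun k _ => ?_
  refine Finset.sum_congr rfl fun l _ => ?_
  ring

/-- off-diagonal part of `SᵀS` -/
noncomputable def offM {q m : ℕ} [NeZero m] {n : Fin q → ℕ}
    (g : ∀ k, Fin (n k) → Fin m) (w : ∀ k, Fin (n k) → Bool) (i j : ∀ k, Fin (n k)) : ℝ :=
  if i = j then 0 else (∏ t, bsgn (w t (i t))) * (∏ t, bsgn (w t (j t))) *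
        (if hashFam g i = hashFam g j then 1 else 0)

/-- the error matrix -/
noncomputable def errM {q m : ℕ} [NeZero m] {n : Fin q → ℕ} {nc nc' : ℕ}
    (A : Matrix (∀ k, Fin (n k)) (Fin nc) ℝ) (B : Matrix (∀ k, Fin (n k)) (Fin nc') ℝ)
    (g : ∀ k, Fin (n k) → Fin m) (v : ∀ k, Fin (n k) → ℝ) : Matrix (Fin nc) (Fin nc') ℝ :=
  Aᵀ * (tsMat g v)ᵀ * tsMat g v * B - Aᵀ * B

lemma bsgn_sq (b : Bool) : bsgn b * bsgn b = 1 := by cases b <;> simp [bsgn]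

lemma errM_apply {q m : ℕ} [NeZero m] {n : Fin q → ℕ} {nc nc' : ℕ}
    (A : Matrix (∀ k, Fin (n k)) (Fin nc) ℝ) (B : Matrix (∀ k, Fin (n k)) (Fin nc') ℝ)
    (g : ∀ k, Fin (n k) → Fin m) (w : ∀ k, Fin (n k) → Bool) (a : Fin nc) (b : Fin nc') :
    errM A B g (fun k i => bsgn (w k i)) a b = ∑ i, ∑ j, A i a * B j b * offM g w i j := by
  have hS : (tsMat g (fun k i => bsgn (w k i)))ᵀ * tsMat g (fun k i => bsgn (w k i)) - 1 =
      Matrix.of (offM g w) := by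
    ext i j
    simp only [Matrix.sub_apply, Matrix.mul_apply, Matrix.transpose_apply, tsMat, countSketch,
      Matrix.of_apply, offM, Matrix.one_apply]
    simp only [ite_mul, zero_mul, Finset.sum_ite_eq, Finset.mem_univ, if_true]
    by_cases h : i = j
    · subst h
      simp [← Finset.prod_mul_distrib, bsgn_sq]
    · simp only [h, if_false, sub_zero, eq_comm (a := hashFam g j)]
      split_ifs <;> simp
  have : errM A B g (fun k i => bsgn (w k i)) = Aᵀ * Matrix.of (offM g w) * B := by
    rw [← hS, errM, Matrix.mul_sub, Matrix.sub_mul, Matrix.mul_one, Matrix.mul_assoc Aᵀ]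
  rw [this]
  simp only [Matrix.mul_apply, Matrix.transpose_apply, Matrix.of_apply, Finset.sum_mul]
  rw [Finset.sum_comm]
  exact Finset.sum_congr rfl fun i _ => Finset.sum_congr rfl fun j _ => by ring

variable {Ω : Type*} [MeasurableSpace Ω] {μ : Measure Ω} [IsProbabilityMeasure μ]

lemma expect_bound {q m : ℕ} [NeZero m] {n : Fin q → ℕ} {nc nc' : ℕ}
    {H : ∀ k, Ω → Fin (n k) → Fin m} {V : ∀ k, Ω → Fin (n k) → ℝ}
    (h3 : ∀ k, KWiseIndepHash μ 3 (H k)) (h4 : ∀ k, KWiseIndepSign μ 4 (V k))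
    (A : Matrix (∀ k, Fin (n k)) (Fin nc) ℝ) (B : Matrix (∀ k, Fin (n k)) (Fin nc') ℝ) :
    ∑ s : (∀ k, Fin (n k) → Fin m) × (∀ k, Fin (n k) → Bool),
      ((∏ t, μ.real {ω | H t ω = s.1 t}) * ∏ t, μ.real {ω | toB (V t ω) = s.2 t}) *
        frobSq (errM A B s.1 (fun k i => bsgn (s.2 k i))) ≤
      3 ^ q / (m : ℝ) * (frobSq A * frobSq B) := by
  set p : (∀ k, Fin (n k) → Fin m) × (∀ k, Fin (n k) → Bool) → ℝ := fun s =>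
    ((∏ t, μ.real {ω | H t ω = s.1 t}) * ∏ t, μ.real {ω | toB (V t ω) = s.2 t}) with hp
  have hN : ∀ i j k l : ∀ k, Fin (n k), |∑ s, p s * (offM s.1 s.2 i j * offM s.1 s.2 k l)| ≤
      1 / (m : ℝ) * ∏ t, tsK (i t) (j t) (k t) (l t) := by
    intro i j k l
    have hnn : 0 ≤ 1 / (m : ℝ) * ∏ t, tsK (i t) (j t) (k t) (l t) :=
      mul_nonneg (by positivity) (Finset.prod_nonneg fun _ _ => tsK_nonneg _ _ _ _)
    by_cases hij : i = j
    · simpa [offM, hij] using (by simpa [hij] using hnn)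
    by_cases hkl : k = l
    · simpa [offM, hkl] using (by simpa [hkl] using hnn)
    have := joint_bound h3 h4 hij k l
    rw [Fintype.sum_prod_type]
    simpa only [offM, hij, hkl, if_false, hp] using this
  have hab : ∀ (a : Fin nc) (b : Fin nc'),
      ∑ s, p s * (errM A B s.1 (fun k i => bsgn (s.2 k i)) a b) ^ 2 ≤
      3 ^ q / (m : ℝ) * ((∑ i, A i a ^ 2) * ∑ j, B j b ^ 2) := by
    intro a b
    simp only [errM_apply]
    rw [quad_expand p (fun s => offM s.1 s.2) (fun i => A i a) (fun j => B j b)]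
    have hT := tsK_tensor (fun i => |A i a|) (fun j => |B j b|) (fun i => |A i a|)
      (fun j => |B j b|) (fun _ => abs_nonneg _) (fun _ => abs_nonneg _) (fun _ => abs_nonneg _)
      (fun _ => abs_nonneg _)
    simp only [sq_abs] at hT
    have hA : 0 ≤ ∑ i, A i a ^ 2 := by positivity
    have hB : 0 ≤ ∑ j, B j b ^ 2 := by positivity
    calc _ ≤ ∑ i, ∑ j, ∑ k, ∑ l, |A i a| * |B j b| * |A k a| * |B l b| *
            (1 / (m : ℝ) * ∏ t, tsK (i t) (j t) (k t) (l t)) := by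
          refine Finset.sum_le_sum fun i _ => Finset.sum_le_sum fun j _ =>
            Finset.sum_le_sum fun k _ => Finset.sum_le_sum fun l _ => ?_
          refine (le_abs_self _).trans ?_
          rw [abs_mul, abs_mul, abs_mul, abs_mul]
          exact mul_le_mul_of_nonneg_left (hN i j k l) (by positivity)
      _ = 1 / (m : ℝ) * ∑ i, ∑ j, ∑ k, ∑ l, |A i a| * |B j b| * |A k a| * |B l b| *
            ∏ t, tsK (i t) (j t) (k t) (l t) := by
          simp only [Finset.mul_sum]
          refine Finset.sum_congr rfl fun i _ => Finset.sum_congr rfl fun j _ =>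
            Finset.sum_congr rfl fun k _ => Finset.sum_congr rfl fun l _ => ?_
          ring
      _ ≤ 1 / (m : ℝ) * (3 ^ q * (√(∑ i, A i a ^ 2) * √(∑ j, B j b ^ 2) *
            √(∑ i, A i a ^ 2) * √(∑ j, B j b ^ 2))) := by
          gcongr
      _ = 1 / (m : ℝ) * (3 ^ q * ((√(∑ i, A i a ^ 2)) ^ 2 * (√(∑ j, B j b ^ 2)) ^ 2)) := by ring
      _ = _ := by rw [Real.sq_sqrt hA, Real.sq_sqrt hB]; ring
  calc _ = ∑ a, ∑ b, ∑ s, p s * (errM A B s.1 (fun k i => bsgn (s.2 k i)) a b) ^ 2 := by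
        simp only [frobSq, Finset.mul_sum]
        rw [Finset.sum_comm]
        refine Finset.sum_congr rfl fun a _ => ?_
        rw [Finset.sum_comm]
    _ ≤ ∑ a, ∑ b, 3 ^ q / (m : ℝ) * ((∑ i, A i a ^ 2) * ∑ j, B j b ^ 2) :=
        Finset.sum_le_sum fun a _ => Finset.sum_le_sum fun b _ => hab a b
    _ = _ := by
        rw [frobSq, frobSq, Finset.sum_comm (f := fun i j => A i j ^ 2),
          Finset.sum_comm (f := fun i j => B i j ^ 2), Finset.sum_mul_sum]
        simp only [Finset.mul_sum]

lemma frobSq_nonneg {α β : Type*} [Fintype α] [Fintype β] (A : Matrix α β ℝ) : 0 ≤ frobSq A := by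
  unfold frobSq; positivity

end assembly


/-- Lemma 4.1, approximate matrix product for TensorSketch: for a random
TensorSketch matrix `S ∈ ℝ^{m × n₁⋯n_q}` generated by mutually independent 3-wise
independent hash maps `h_i` and mutually independent 4-wise independent sign functions
`v_i` (all mutually independent), and fixed matrices `A, B` with `n₁⋯n_q` rows, if
`m ≥ (2 + 3^q)/(ε₀² δ₀)` then
`Pr[‖Aᵀ Sᵀ S B - Aᵀ B‖_F² ≤ ε₀² ‖A‖_F² ‖B‖_F²] ≥ 1 - δ₀`. -/
theorem tensorSketch_approx_matrix_product
    {Ω : Type*} [MeasurableSpace Ω] (μ : Measure Ω) [IsProbabilityMeasure μ]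
    {q m : ℕ} [NeZero m] {n : Fin q → ℕ} {nc nc' : ℕ}
    (H : ∀ k, Ω → Fin (n k) → Fin m) (V : ∀ k, Ω → Fin (n k) → ℝ)
    (h3 : ∀ k, KWiseIndepHash μ 3 (H k))
    (h4 : ∀ k, KWiseIndepSign μ 4 (V k))
    (hmut : IndepHashSigns μ H V)
    (A : Matrix (∀ k, Fin (n k)) (Fin nc) ℝ) (B : Matrix (∀ k, Fin (n k)) (Fin nc') ℝ)
    (ε₀ δ₀ : ℝ) (hε₀ : 0 < ε₀) (hδ₀ : 0 < δ₀)
    (hm : (2 + 3 ^ q : ℝ) / (ε₀ ^ 2 * δ₀) ≤ (m : ℝ)) :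
    1 - δ₀ ≤ (μ {ω |
      frobSq (Aᵀ * (tsMat (fun k => H k ω) (fun k => V k ω))ᵀ *
          tsMat (fun k => H k ω) (fun k => V k ω) * B - Aᵀ * B) ≤
        ε₀ ^ 2 * frobSq A * frobSq B}).toReal := by
  classical
  set T : ℝ := ε₀ ^ 2 * frobSq A * frobSq B with hT
  set p : (∀ k, Fin (n k) → Fin m) × (∀ k, Fin (n k) → Bool) → ℝ := fun s =>
    ((∏ t, μ.real {ω | H t ω = s.1 t}) * ∏ t, μ.real {ω | toB (V t ω) = s.2 t}) with hp
  set Z : (∀ k, Fin (n k) → Fin m) × (∀ k, Fin (n k) → Bool) → ℝ := fun s =>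
    frobSq (errM A B s.1 (fun k i => bsgn (s.2 k i))) with hZ
  have hE : ∑ s, p s * Z s ≤ 3 ^ q / (m : ℝ) * (frobSq A * frobSq B) := expect_bound h3 h4 A B
  have hp0 : ∀ s, 0 ≤ p s := fun s => mul_nonneg
    (Finset.prod_nonneg fun _ _ => measureReal_nonneg)
    (Finset.prod_nonneg fun _ _ => measureReal_nonneg)
  have hZ0 : ∀ s, 0 ≤ Z s := fun s => frobSq_nonneg _
  have hm0 : (0 : ℝ) < m := by exact_mod_cast Nat.pos_of_ne_zero (NeZero.ne m)
  -- atoms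
  have hatom : ∀ s, μ.real {ω | (∀ k, H k ω = s.1 k) ∧ ∀ k, toB (V k ω) = s.2 k} = p s := by
    intro s
    have hVe : ∀ k ω, (toB (V k ω) = s.2 k ↔ V k ω = fun i => bsgn (s.2 k i)) := by
      intro k ω
      simp only [funext_iff, toB_eq_iff ((h4 k).1 ω)]
    have := hmut s.1 (fun k i => bsgn (s.2 k i))
    simp only [hp, Measure.real, hVe]
    rw [this, ENNReal.toReal_mul, ENNReal.toReal_prod, ENNReal.toReal_prod]
  set good : Set Ω := {ω |
      frobSq (Aᵀ * (tsMat (fun k => H k ω) (fun k => V k ω))ᵀ *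
          tsMat (fun k => H k ω) (fun k => V k ω) * B - Aᵀ * B) ≤ T} with hgood
  set bad := Finset.univ.filter (fun s => T < Z s) with hbad
  have hbadle : μ.real goodᶜ ≤ ∑ s ∈ bad, p s := by
    have hsub : goodᶜ ⊆ ⋃ s ∈ bad, {ω | (∀ k, H k ω = s.1 k) ∧ ∀ k, toB (V k ω) = s.2 k} := by
      intro ω hω
      simp only [Set.mem_iUnion]
      refine ⟨(fun k => H k ω, fun k => toB (V k ω)), ?_, fun _ => rfl, fun _ => rfl⟩
      simp only [hbad, Finset.mem_filter, Finset.mem_univ, true_and, hZ]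
      have hv : (fun (k : Fin q) (i : Fin (n k)) => bsgn (toB (V k ω) i)) = fun k => V k ω := by
        funext k i
        exact bsgn_toB ((h4 k).1 ω) i
      rw [hv]
      exact not_le.1 hω
    refine (measureReal_mono hsub (measure_ne_top _ _)).trans ((measureReal_biUnion_finset_le _ _).trans ?_)
    exact le_of_eq (Finset.sum_congr rfl fun s _ => hatom s)
  have hpbad : ∑ s ∈ bad, p s ≤ δ₀ := by
    have hC : 0 ≤ frobSq A * frobSq B := mul_nonneg (frobSq_nonneg _) (frobSq_nonneg _)
    rcases hC.eq_or_lt with hC0 | hCpos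
    · rw [← hC0, mul_zero] at hE
      have hz : ∀ s ∈ bad, p s = 0 := by
        intro s hs
        have hs' : T < Z s := (Finset.mem_filter.1 hs).2
        have hT0 : T = 0 := by rw [hT, mul_assoc, ← hC0, mul_zero]
        have h1 : p s * Z s ≤ 0 := (Finset.single_le_sum
          (fun s _ => mul_nonneg (hp0 s) (hZ0 s)) (Finset.mem_univ s)).trans hE
        rw [hT0] at hs'
        have h2 := hp0 s
        by_contra hne
        have : 0 < p s := lt_of_le_of_ne h2 (Ne.symm hne)
        have := mul_pos this hs'
        linarith
      rw [Finset.sum_eq_zero hz]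
      exact hδ₀.le
    · have h1 : (∑ s ∈ bad, p s) * T ≤ ∑ s, p s * Z s := by
        rw [Finset.sum_mul]
        refine (Finset.sum_le_sum fun s hs => mul_le_mul_of_nonneg_left
          (Finset.mem_filter.1 hs).2.le (hp0 s)).trans ?_
        exact Finset.sum_le_sum_of_subset_of_nonneg (Finset.subset_univ _)
          fun s _ _ => mul_nonneg (hp0 s) (hZ0 s)
      have h2 : (3 : ℝ) ^ q / m ≤ ε₀ ^ 2 * δ₀ := by
        rw [div_le_iff₀ (by positivity)] at hm
        rw [div_le_iff₀ hm0]
        linarith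
      have h3' : (∑ s ∈ bad, p s) * T ≤ δ₀ * T := by
        refine h1.trans (hE.trans ((mul_le_mul_of_nonneg_right h2 hC).trans (le_of_eq ?_)))
        rw [hT]; ring
      have hTpos : 0 < T := by
        rw [hT, mul_assoc]; exact mul_pos (by positivity) hCpos
      exact le_of_mul_le_mul_right h3' hTpos
  have hone : 1 ≤ μ.real good + μ.real goodᶜ := by
    have := measureReal_union_le (μ := μ) good goodᶜ
    rw [Set.union_compl_self] at this
    simpa using this
  change 1 - δ₀ ≤ μ.real good
  linarith
end
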